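/- Let g be a positive integer and let (B,π) be a g-wide signed graph. If (B,π) is SP-complete, then EDC(B,π) is SP-complete. -/

import Mathlib

open SimpleGraph

namespace SignedPaper

variable {V : Type*} {W : Type*}

/-- The product of the signs (values of `σ`) along the darts of a walk. -/
def walkSign {G : SimpleGraph V} (σ : V → V → ℤ) {a b : V} (w : G.Walk a b) : ℤ :=
  (w.darts.map fun d => σ d.toProd.1 d.toProd.2).prod

/-- The length of a walk in a weighted signed graph: the sum of the absolute
values of the weights of its edges, with multiplicity. -/
def walkWLen {G : SimpleGraph V} (ω : V → V → ℤ) {a b : V} (w : G.Walk a b) : ℕ :=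
  (w.darts.map fun d => (ω d.toProd.1 d.toProd.2).natAbs).sum

/-- Walk-girth of type `ij` of a signed graph: the length of a shortest closed walk
which is negative iff `neg` and of odd length iff `odd` (`⊤` if none exists). -/
noncomputable def sGirth (G : SimpleGraph V) (σ : V → V → ℤ) (neg odd : Bool) : ℕ∞ :=
  sInf {n : ℕ∞ | ∃ (a : V) (w : G.Walk a a), (w.length : ℕ∞) = n ∧
    (walkSign σ w < 0 ↔ neg = true) ∧ (Odd w.length ↔ odd = true)}

/-- Walk-girth of type `ij` of a weighted signed graph. -/
noncomputable def wGirth (G : SimpleGraph V) (ω : V → V → ℤ) (neg odd : Bool) : ℕ∞ :=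
  sInf {n : ℕ∞ | ∃ (a : V) (w : G.Walk a a), (walkWLen ω w : ℕ∞) = n ∧
    (walkSign ω w < 0 ↔ neg = true) ∧ (Odd (walkWLen ω w) ↔ odd = true)}

/-- A graph homomorphism is a homomorphism of signed graphs if it preserves
the signs of all closed walks. -/
def IsSignedHom {G : SimpleGraph V} {H : SimpleGraph W} (σ : V → V → ℤ) (π : W → W → ℤ)
    (f : G →g H) : Prop :=
  ∀ (a : V) (w : G.Walk a a), walkSign π (w.map f) = walkSign σ w

/-- A signed graph is `g`-wide if it has no positive closed walk of odd length, and
every negative closed walk has length at least `g` and of the same parity as `g`. -/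
def gWide (G : SimpleGraph V) (σ : V → V → ℤ) (g : ℕ) : Prop :=
  (∀ (a : V) (w : G.Walk a a), 0 < walkSign σ w → ¬ Odd w.length) ∧
  (∀ (a : V) (w : G.Walk a a), walkSign σ w < 0 → g ≤ w.length ∧ (Odd w.length ↔ Odd g))

open Classical in
/-- The algebraic distance between two vertices of a signed graph. -/
noncomputable def adist (G : SimpleGraph V) (σ : V → V → ℤ) (u v : V) : ℤ :=
  if ∃ w : G.Walk u v, w.IsPath ∧ w.length = G.dist u v ∧ 0 < walkSign σ w
  then (G.dist u v : ℤ) else -(G.dist u v : ℤ)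

/-- The underlying graph of the Extended Double Cover of a signed graph:
`(v, true)` plays the role of `v⁺` and `(v, false)` of `v⁻`. -/
def EDCsg (G : SimpleGraph V) (σ : V → V → ℤ) (hσ : ∀ u v, σ u v = σ v u) :
    SimpleGraph (V × Bool) where
  Adj x y := (x.1 = y.1 ∧ x.2 ≠ y.2) ∨ (G.Adj x.1 y.1 ∧ (x.2 = y.2 ↔ 0 < σ x.1 y.1))
  symm.symm := fun x y h => by
    rcases h with ⟨h1, h2⟩ | ⟨ha, hb⟩
    · exact Or.inl ⟨h1.symm, h2.symm⟩
    · refine Or.inr ⟨ha.symm, ?_⟩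
      rw [hσ y.1 x.1, eq_comm]
      exact hb
  loopless.irrefl := fun x h => by
    rcases h with ⟨-, h⟩ | ⟨h, -⟩
    · exact h rfl
    · exact G.loopless.irrefl _ h

open Classical in
/-- The signature of the Extended Double Cover: edges `v⁺v⁻` are negative,
all other edges are positive. -/
noncomputable def edcSign : V × Bool → V × Bool → ℤ := fun x y =>
  if x.1 = y.1 then -1 else 1

/-- The underlying graph of the Extended Double Cover of a weighted signed graph. -/
def EDCw (G : SimpleGraph V) : SimpleGraph (V × Bool) where
  Adj x y := (x.1 = y.1 ∧ x.2 ≠ y.2) ∨ G.Adj x.1 y.1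
  symm.symm := fun x y h => by
    rcases h with ⟨h1, h2⟩ | h
    · exact Or.inl ⟨h1.symm, h2.symm⟩
    · exact Or.inr h.symm
  loopless.irrefl := fun x h => by
    rcases h with ⟨-, h⟩ | h
    · exact h rfl
    · exact G.loopless.irrefl _ h

open Classical in
/-- The weights of the Extended Double Cover of a weighted signed graph `(G, ω)`. -/
noncomputable def EDCwWeight (ω : V → V → ℤ) : V × Bool → V × Bool → ℤ := fun x y =>
  if x.1 = y.1 then -1
  else if x.2 = y.2 then (if 0 < ω x.1 y.1 then ω x.1 y.1 else ω x.1 y.1 - 1)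
  else (if 0 < ω x.1 y.1 then -(ω x.1 y.1 + 1) else -(ω x.1 y.1))

/-- `G` has a `K₄`-minor: there are four disjoint nonempty connected branch sets,
pairwise joined by an edge. -/
def HasK4Minor (G : SimpleGraph V) : Prop :=
  ∃ S : Fin 4 → Set V,
    (∀ i, (G.induce (S i)).Connected) ∧
    (∀ i j, i ≠ j → Disjoint (S i) (S j)) ∧
    (∀ i j, i ≠ j → ∃ u ∈ S i, ∃ v ∈ S j, G.Adj u v)

/-- A signed graph `(B, π)` is SP-complete if every connected signed graph whose
underlying graph is finite and `K₄`-minor-free and which satisfies the conclusion of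
the no-homomorphism lemma with respect to `(B, π)` admits a homomorphism to `(B, π)`. -/
def SPComplete (B : SimpleGraph W) (π : W → W → ℤ) : Prop :=
  ∀ (V' : Type) (G : SimpleGraph V') (σ : V' → V' → ℤ),
    Finite V' → (∀ u v, σ u v = σ v u) →
    (∀ u v, G.Adj u v → σ u v = 1 ∨ σ u v = -1) →
    G.Connected → ¬ HasK4Minor G →
    (∀ neg odd : Bool, sGirth B π neg odd ≤ sGirth G σ neg odd) →
    ∃ f : G →g B, IsSignedHom σ π f

/-- The cylinder `C_{2a} □ P_b` on vertex set `{0,…,2a-1} × {0,…,b-1}`. -/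
def cylT (a b : ℕ) : SimpleGraph (Fin (2 * a) × Fin b) where
  Adj x y := (x.1 = y.1 ∧ ((x.2.val : ℤ) - (y.2.val : ℤ)).natAbs = 1) ∨
    (x.2 = y.2 ∧ (((x.1.val : ℤ) - (y.1.val : ℤ)).natAbs = 1 ∨
      ((x.1.val : ℤ) - (y.1.val : ℤ)).natAbs = 2 * a - 1))
  symm.symm := fun x y h => by
    rcases h with ⟨h1, h2⟩ | ⟨h1, h2 | h2⟩
    · exact Or.inl ⟨h1.symm, by omega⟩
    · exact Or.inr ⟨h1.symm, Or.inl (by omega)⟩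
    · exact Or.inr ⟨h1.symm, Or.inr (by omega)⟩
  loopless.irrefl := fun x h => by
    have hpos : 0 < 2 * a := x.1.pos
    rcases h with ⟨-, h⟩ | ⟨-, h | h⟩ <;> omega

/-- Two vertices of the cylinder are antipodal if `|Δi| + |Δj| = a + b - 1`. -/
def antip (a b : ℕ) (x y : Fin (2 * a) × Fin b) : Prop :=
  ((x.1.val : ℤ) - (y.1.val : ℤ)).natAbs + ((x.2.val : ℤ) - (y.2.val : ℤ)).natAbs = a + b - 1

/-- The twisted tube: the cylinder together with the antipodal edges `J`. -/
def twistedTube (a b : ℕ) : SimpleGraph (Fin (2 * a) × Fin b) where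
  Adj x y := (cylT a b).Adj x y ∨ (x ≠ y ∧ antip a b x y)
  symm.symm := fun x y h => by
    rcases h with h | ⟨hne, h⟩
    · exact Or.inl ((cylT a b).symm.symm _ _ h)
    · refine Or.inr ⟨hne.symm, ?_⟩
      unfold antip at h ⊢
      omega
  loopless.irrefl := fun x h => by
    rcases h with h | ⟨hne, -⟩
    · exact (cylT a b).loopless.irrefl x h
    · exact hne rfl

/-- The signature of the twisted tube: antipodal edges (the set `J`) are negative,
all other edges are positive. -/
def ttSign (a b : ℕ) (x y : Fin (2 * a) × Fin b) : ℤ :=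
  if ((x.1.val : ℤ) - (y.1.val : ℤ)).natAbs + ((x.2.val : ℤ) - (y.2.val : ℤ)).natAbs
      = a + b - 1 then -1 else 1

/-- The underlying graph of the signed projective cube `SPC(k)`: vertices are elements
of `ℤ₂^k`, adjacent if they differ in exactly one coordinate or in all coordinates. -/
def spcGraph (k : ℕ) : SimpleGraph (Fin k → ZMod 2) where
  Adj x y := x ≠ y ∧ (hammingDist x y = 1 ∨ hammingDist x y = k)
  symm.symm := fun x y h => ⟨h.1.symm, by rw [hammingDist_comm]; exact h.2⟩
  loopless.irrefl := fun x h => h.1 rfl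

/-- The signature of `SPC(k)`: an edge is negative iff its endpoints differ in
all coordinates. -/
def spcSign (k : ℕ) (x y : Fin k → ZMod 2) : ℤ :=
  if hammingDist x y = k then -1 else 1

lemma spcSign_symm (k : ℕ) : ∀ x y : Fin k → ZMod 2, spcSign k x y = spcSign k y x := by
  intro x y
  unfold spcSign
  rw [hammingDist_comm]

/-- The function `f_g`. -/
def fg (g : ℕ) (x : ℤ) : ℤ := if 0 < x then x else (g : ℤ) + x

/-- `(G, σ)` is (a realization of) the signed graph `T_g(p,q,r)`: three distinguished
vertices `x, y, z` joined by six internally disjoint paths of prescribed lengths and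
signs, whose edges exhaust `G`. -/
def IsTgpqr (G : SimpleGraph V) (σ : V → V → ℤ) (g : ℕ) (p q r : ℤ) : Prop :=
  ∃ (x y z : V) (P1 P2 : G.Walk x y) (Q1 Q2 : G.Walk y z) (R1 R2 : G.Walk z x),
    x ≠ y ∧ y ≠ z ∧ z ≠ x ∧
    P1.IsPath ∧ P2.IsPath ∧ Q1.IsPath ∧ Q2.IsPath ∧ R1.IsPath ∧ R2.IsPath ∧
    P1.length = p.natAbs ∧ P2.length = g - p.natAbs ∧
    Q1.length = q.natAbs ∧ Q2.length = g - q.natAbs ∧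
    R1.length = r.natAbs ∧ R2.length = g - r.natAbs ∧
    walkSign σ P1 = Int.sign p ∧ walkSign σ P2 = -Int.sign p ∧
    walkSign σ Q1 = Int.sign q ∧ walkSign σ Q2 = -Int.sign q ∧
    walkSign σ R1 = Int.sign r ∧ walkSign σ R2 = -Int.sign r ∧
    (∀ e ∈ G.edgeSet, e ∈ P1.edges ∨ e ∈ P2.edges ∨ e ∈ Q1.edges ∨ e ∈ Q2.edges ∨
      e ∈ R1.edges ∨ e ∈ R2.edges) ∧
    (∀ i j : Fin 6, i ≠ j → ∀ v : V,
      v ∈ (![{v | v ∈ P1.support}, {v | v ∈ P2.support}, {v | v ∈ Q1.support},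
            {v | v ∈ Q2.support}, {v | v ∈ R1.support}, {v | v ∈ R2.support}] : Fin 6 → Set V) i →
      v ∈ (![{v | v ∈ P1.support}, {v | v ∈ P2.support}, {v | v ∈ Q1.support},
            {v | v ∈ Q2.support}, {v | v ∈ R1.support}, {v | v ∈ R2.support}] : Fin 6 → Set V) j →
      v = x ∨ v = y ∨ v = z)

/-!
For a negative closed walk of minimal length `k + 1` in `(B, π)`, the graphs `(G, σ)` to be mapped
to `EDC(B, π)` are `(k + 2)`-wide. The lengths of shortest positive and negative walks of such a
`(G, σ)` form a metric with values in pairs, in which the negative distance from `u` to `v` plays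
the role of the distance from `u` to the antipode of `v`, and this metric maps to the cube
`ℤ₂^(k + 2)` without increasing the distance between adjacent vertices: by Dirac's theorem a
`K₄`-minor-free graph has a vertex of degree at most two, which can be contracted into a neighbour
and later reinserted because parity-compatible balls of the cube meet as soon as they meet pairwise.
The `k + 2` coordinates of this map are disjoint signatures equivalent to `σ`, that is, a
homomorphism `F` of `(G, σ)` to `EDC(SPC(k))`.

Contracting the components of the fibres of `G → SPC(k)` yields a `K₄`-minor-free signed graph
which maps to `SPC(k)` and hence satisfies the girth conditions for `(B, π)`. A homomorphism of this
quotient to `(B, π)` lifts to `EDC(B, π)`: it preserves signs up to switching, and switching amounts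
to exchanging `v⁺` and `v⁻` in the values of `F`. If `G` has no negative closed walk, then it is
bipartite and maps to a single edge `v⁺v⁻`.
-/

section Contraction

theorem preconnected_induce_preimage {G : SimpleGraph V} {c : V → W}
    (hc : ∀ p, (G.induce (c ⁻¹' {p})).Preconnected) {T : Set W}
    (hT : ((G.map c).induce T).Preconnected) : (G.induce (c ⁻¹' T)).Preconnected := by
  have of_fiber : ∀ u v : c ⁻¹' T, c u = c v → (G.induce (c ⁻¹' T)).Reachable u v := by
    rintro ⟨u, hu⟩ ⟨v, hv⟩ huv
    have hle : c ⁻¹' {c u} ≤ c ⁻¹' T := fun x (hx : c x = c u) => by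
      rw [Set.mem_preimage, hx]
      exact hu
    exact (hc (c u) ⟨u, rfl⟩ ⟨v, huv.symm⟩).map (G.induceHomOfLE hle).toHom
  have of_walk : ∀ {p q : T}, ((G.map c).induce T).Walk p q →
      ∀ u v : c ⁻¹' T, c u = p → c v = q → (G.induce (c ⁻¹' T)).Reachable u v := by
    intro p q w
    induction w with
    | nil => exact fun u v hu hv => of_fiber u v (hu.trans hv.symm)
    | @cons p p' q hadj _ ih =>
      intro u v hu hv
      obtain ⟨-, a, b, hab, ha, hb⟩ := (map_adj' ..).1 (comap_adj.1 hadj)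
      let a' : c ⁻¹' T := ⟨a, by simp_all⟩
      let b' : c ⁻¹' T := ⟨b, by simp_all⟩
      have hab' : (G.induce (c ⁻¹' T)).Adj a' b' := hab
      exact (of_fiber u a' (hu.trans ha.symm)).trans (hab'.reachable.trans (ih b' v hb hv))
  intro u v
  obtain ⟨w⟩ := hT ⟨c u, u.2⟩ ⟨c v, v.2⟩
  exact of_walk w u v rfl rfl

theorem HasK4Minor.of_map {G : SimpleGraph V} {c : V → W}
    (hc : ∀ p, (G.induce (c ⁻¹' {p})).Preconnected) (h : HasK4Minor (G.map c)) :
    HasK4Minor G := by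
  obtain ⟨S, hconn, hdisj, hadj⟩ := h
  have lift_adj : ∀ i j, i ≠ j → ∃ u ∈ c ⁻¹' S i, ∃ v ∈ c ⁻¹' S j, G.Adj u v := by
    intro i j hij
    obtain ⟨p, hp, q, hq, hpq⟩ := hadj i j hij
    obtain ⟨-, u, v, huv, rfl, rfl⟩ := (map_adj' ..).1 hpq
    exact ⟨u, hp, v, hq, huv⟩
  refine ⟨fun i => c ⁻¹' S i, fun i => ?_, fun i j hij => (hdisj i j hij).preimage c, lift_adj⟩
  obtain ⟨j, hj⟩ := exists_ne i
  obtain ⟨u, hu, -⟩ := lift_adj i j hj.symm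
  exact (connected_iff _).2 ⟨preconnected_induce_preimage hc (hconn i).preconnected, ⟨⟨u, hu⟩⟩⟩

open Classical in
/-- The contraction of the vertex set `S` to its element `r`, as a graph on the same vertex type:
the vertices of `S` other than `r` become isolated. -/
noncomputable def contract (H : SimpleGraph V) (S : Set V) (r : V) : SimpleGraph V :=
  H.map fun v => if v ∈ S then r else v

variable {H : SimpleGraph V} {S : Set V} {r u v x : V}

open Classical in
theorem contract_adj : (contract H S r).Adj u v ↔ u ≠ v ∧
    ∃ a b, H.Adj a b ∧ (if a ∈ S then r else a) = u ∧ (if b ∈ S then r else b) = v :=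
  map_adj' ..

theorem contract_adj_of_notMem (hr : r ∈ S) (hu : u ∉ S) (hv : v ∉ S) :
    (contract H S r).Adj u v ↔ H.Adj u v := by
  rw [contract_adj]
  refine ⟨?_, fun h => ⟨h.ne, u, v, h, if_neg hu, if_neg hv⟩⟩
  rintro ⟨-, a, b, hab, ha, hb⟩
  grind

theorem contract_adj_root (hr : r ∈ S) (hv : v ∉ S) :
    (contract H S r).Adj v r ↔ ∃ s ∈ S, H.Adj v s := by
  rw [contract_adj]
  constructor
  · rintro ⟨-, a, b, hab, ha, hb⟩
    exact ⟨b, by grind, by grind⟩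
  · rintro ⟨s, hs, h⟩
    exact ⟨fun hvr => hv (hvr ▸ hr), v, s, h, if_neg hv, if_pos hs⟩

theorem eq_root_of_contract_adj (h : (contract H S r).Adj v u) (hv : v ∈ S) : v = r := by
  obtain ⟨-, a, b, -, ha, -⟩ := contract_adj.1 h
  grind

theorem HasK4Minor.of_contract (hr : r ∈ S) (hS : (H.induce S).Connected)
    (h : HasK4Minor (contract H S r)) : HasK4Minor H := by
  classical
  refine HasK4Minor.of_map (fun p => ?_) h
  by_cases hp : p = r
  · have hfiber : (fun v => if v ∈ S then r else v) ⁻¹' {p} = S := by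
      ext v
      simp only [hp, Set.mem_preimage, Set.mem_singleton_iff]
      grind
    rw [hfiber]
    exact hS.preconnected
  · rintro ⟨a, ha⟩ ⟨b, hb⟩
    simp only [Set.mem_preimage, Set.mem_singleton_iff] at ha hb
    have hab : a = b := by grind
    subst hab
    rfl

theorem support_contract_ssubset (hr : r ∈ S) (hS : (H.induce S).Connected)
    (hx : x ∈ S) (hxr : x ≠ r) : (contract H S r).support ⊂ H.support := by
  have hsub : S ⊆ H.support := by
    intro s hs
    have : Nontrivial S := ⟨⟨x, hx⟩, ⟨r, hr⟩, by simpa using hxr⟩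
    obtain ⟨t, ht⟩ := hS.preconnected.exists_adj_of_nontrivial ⟨s, hs⟩
    exact ⟨t, ht⟩
  refine ⟨?_, fun h => ?_⟩
  · rintro v ⟨w, h⟩
    by_cases hv : v ∈ S
    · exact hsub hv
    · obtain ⟨-, a, b, hab, ha, -⟩ := contract_adj.1 h
      exact ⟨b, by grind⟩
  · obtain ⟨w, hw⟩ := h (hsub hx)
    exact hxr (eq_root_of_contract_adj hw hx)

/-- The vertex `v` has degree at most two; phrased without a cardinality so that the (not
necessarily distinct) neighbours come with the hypothesis. -/
def DegreeLETwo (H : SimpleGraph V) (v : V) : Prop :=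
  ∃ a b, H.neighborSet v ⊆ {a, b}

theorem exists_ne_adj_of_not_degreeLETwo (h : ¬ DegreeLETwo H v) (a b : V) :
    ∃ c, H.Adj v c ∧ c ≠ a ∧ c ≠ b := by
  by_contra! hc
  exact h ⟨a, b, fun c hvc => by grind [mem_neighborSet]⟩

theorem exists_two_adj_of_degreeLETwo_contract (hr : r ∈ S) (hv : v ∉ S)
    (hlow : DegreeLETwo (contract H S r) v) (hH : ¬ DegreeLETwo H v) :
    ∃ s ∈ S, ∃ t ∈ S, s ≠ t ∧ H.Adj v s ∧ H.Adj v t := by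
  classical
  by_contra! hone
  obtain ⟨a, b, hab⟩ := hlow
  have outside : ∀ w ∉ S, H.Adj v w → w = a ∨ w = b := fun w hw h =>
    hab ((contract_adj_of_notMem hr hv hw).2 h)
  by_cases hs : ∃ s ∈ S, H.Adj v s
  · have hrab : r = a ∨ r = b := hab ((contract_adj_root hr hv).2 hs)
    obtain ⟨s, hs, hvs⟩ := hs
    obtain ⟨c, hc, hcs, hc'⟩ :=
      exists_ne_adj_of_not_degreeLETwo hH s (if r = a then b else a)
    grind
  · obtain ⟨c, hc, hca, hcb⟩ := exists_ne_adj_of_not_degreeLETwo hH a b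
    grind

end Contraction

section Dirac

variable {H : SimpleGraph V} {r y z z' p p' v : V}

theorem connected_induce_singleton (H : SimpleGraph V) (v : V) : (H.induce {v}).Connected := by
  rw [induce_singleton_eq_top]
  exact connected_top

theorem connected_induce_insert {S : Set V} {s : V} (hS : (H.induce S).Connected) (hs : s ∈ S)
    (h : H.Adj v s) : (H.induce (insert v S)).Connected := by
  have hvs : insert v S = {v, s} ∪ S := by
    rw [Set.insert_union, Set.singleton_union, Set.insert_eq_of_mem hs]
  rw [hvs]
  exact induce_union_connected (induce_pair_connected_of_adj h).preconnected hS.preconnected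
    ⟨s, by simp, hs⟩

theorem hasK4Minor_of_triangle {x y z : V} {T : Set V} (hxy : H.Adj x y) (hxz : H.Adj x z)
    (hyz : H.Adj y z) (hT : (H.induce T).Connected) (hx : x ∉ T) (hy : y ∉ T) (hz : z ∉ T)
    (hxT : ∃ t ∈ T, H.Adj x t) (hyT : ∃ t ∈ T, H.Adj y t) (hzT : ∃ t ∈ T, H.Adj z t) :
    HasK4Minor H := by
  let S : Fin 4 → Set V := ![{x}, {y}, {z}, T]
  have key : ∀ i j, i < j → Disjoint (S i) (S j) ∧ ∃ u ∈ S i, ∃ v ∈ S j, H.Adj u v := by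
    intro i j hij
    fin_cases i <;> fin_cases j <;> simp_all [S, hxy.ne, hxz.ne, hyz.ne]
  refine ⟨S, fun i => ?_, fun i j hij => ?_, fun i j hij => ?_⟩
  · fin_cases i
    exacts [connected_induce_singleton H x, connected_induce_singleton H y,
      connected_induce_singleton H z, hT]
  · rcases lt_or_gt_of_ne hij with h | h
    exacts [(key i j h).1, (key j i h).1.symm]
  · rcases lt_or_gt_of_ne hij with h | h
    · exact (key i j h).2
    · obtain ⟨u, hu, v, hv, huv⟩ := (key j i h).2
      exact ⟨v, hv, u, hu, huv.symm⟩

theorem adj_iff_of_contract_edge (hz : z ∈ (contract H {r, y} r).support) (hzr : z ≠ r)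
    (hlow : DegreeLETwo (contract H {r, y} r) z) (hH : ¬ DegreeLETwo H z) :
    ∃ b, b ≠ r ∧ b ≠ y ∧ ∀ w, H.Adj z w ↔ w = r ∨ w = y ∨ w = b := by
  have hr : r ∈ ({r, y} : Set V) := by simp
  have hzS : z ∉ ({r, y} : Set V) := by
    obtain ⟨w, hw⟩ := hz
    exact fun h => hzr (eq_root_of_contract_adj hw h)
  obtain ⟨s, hs, t, ht, hst, hzs, hzt⟩ := exists_two_adj_of_degreeLETwo_contract hr hzS hlow hH
  have hzry : H.Adj z r ∧ H.Adj z y := by grind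
  obtain ⟨b, hzb, hbr, hby⟩ := exists_ne_adj_of_not_degreeLETwo hH r y
  obtain ⟨c, d, hcd⟩ := hlow
  have hr_mem : r = c ∨ r = d := hcd ((contract_adj_root hr hzS).2 ⟨r, hr, hzry.1⟩)
  have outside : ∀ w, w ≠ r → w ≠ y → H.Adj z w → w = c ∨ w = d := fun w hwr hwy h =>
    hcd ((contract_adj_of_notMem hr hzS (by simp [hwr, hwy])).2 h)
  refine ⟨b, hbr, hby, fun w => ⟨fun hw => ?_, ?_⟩⟩
  · have hb := outside b hbr hby hzb
    have hw := fun h₁ h₂ => outside w h₁ h₂ hw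
    grind
  · rintro (rfl | rfl | rfl)
    exacts [hzry.1, hzry.2, hzb]

theorem degreeLETwo_of_contract_triangle_edge
    (hz : ∀ w, H.Adj z w ↔ w = r ∨ w = z' ∨ w = p)
    (hz' : ∀ w, H.Adj z' w ↔ w = r ∨ w = z ∨ w = p') (hpr : p ≠ r) (hpr' : p' ≠ r)
    (hpz' : p ≠ z') (hpz : p' ≠ z) (hpp : p ≠ p') (hv : v ∈ (contract H {z, z'} z).support)
    (hvr : v ≠ r) (hlow : DegreeLETwo (contract H {z, z'} z) v) : DegreeLETwo H v := by
  have hzS : z ∈ ({z, z'} : Set V) := by simp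
  by_contra hH
  obtain ⟨w, hw⟩ := hv
  by_cases hvS : v ∈ ({z, z'} : Set V)
  · obtain rfl := eq_root_of_contract_adj hw hvS
    obtain ⟨a, b, hab⟩ := hlow
    have outside : ∀ q, q ≠ v → q ≠ z' → H.Adj v q ∨ H.Adj z' q → q = a ∨ q = b :=
      fun q hqv hqz' h =>
        hab ((contract_adj_root hzS (by simp [hqv, hqz'])).2 (by simpa [adj_comm] using h)).symm
    have hvr := (hz r).2 (by simp)
    have hvp := (hz p).2 (by simp)
    have hr := outside r hvr.ne' ((hz' r).2 (by simp)).ne' (.inl hvr)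
    have hp := outside p hvp.ne' hpz' (.inl hvp)
    have hp' := outside p' hpz ((hz' p').2 (by simp)).ne' (.inr ((hz' p').2 (by simp)))
    grind
  · obtain ⟨s, hs, t, ht, hst, hvs, hvt⟩ :=
      exists_two_adj_of_degreeLETwo_contract hzS hvS hlow hH
    have hzv : H.Adj z v ∧ H.Adj z' v := by grind [adj_comm]
    have hv₁ := (hz v).1 hzv.1
    have hv₂ := (hz' v).1 hzv.2
    grind

theorem hasK4Minor_of_diamond {T : Set V} (hz : ∀ w, H.Adj z w ↔ w = r ∨ w = z' ∨ w = p)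
    (hz' : ∀ w, H.Adj z' w ↔ w = r ∨ w = z ∨ w = p) (hT : (H.induce T).Connected) (hp : p ∈ T)
    (hr : r ∉ T) (hzT : z ∉ T) (hzT' : z' ∉ T) (hrT : ∃ t ∈ T, H.Adj r t) : HasK4Minor H :=
  hasK4Minor_of_triangle ((hz r).2 (by simp)).symm ((hz' r).2 (by simp)).symm
    ((hz z').2 (by simp)) hT hr hzT hzT' hrT ⟨p, hp, (hz p).2 (by simp)⟩
    ⟨p, hp, (hz' p).2 (by simp)⟩

theorem degreeLETwo_of_contract_diamond (hK : ¬ HasK4Minor H)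
    (hz : ∀ w, H.Adj z w ↔ w = r ∨ w = z' ∨ w = p)
    (hz' : ∀ w, H.Adj z' w ↔ w = r ∨ w = z ∨ w = p) (hpr : p ≠ r)
    (hv : v ∈ (contract H {r, z, z', p} r).support) (hvr : v ≠ r)
    (hlow : DegreeLETwo (contract H {r, z, z', p} r) v) : DegreeLETwo H v := by
  have hrS : r ∈ ({r, z, z', p} : Set V) := by simp
  by_contra hH
  obtain ⟨w, hw⟩ := hv
  have hvS : v ∉ ({r, z, z', p} : Set V) := fun h => hvr (eq_root_of_contract_adj hw h)
  simp only [Set.mem_insert_iff, Set.mem_singleton_iff, not_or] at hvS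
  obtain ⟨s, hs, t, ht, hst, hvs, hvt⟩ :=
    exists_two_adj_of_degreeLETwo_contract hrS (by simpa using hvS) hlow hH
  have hvz : ¬ H.Adj v z := fun h => by simpa [hvS] using (hz v).1 h.symm
  have hvz' : ¬ H.Adj v z' := fun h => by simpa [hvS] using (hz' v).1 h.symm
  have hvrp : H.Adj v r ∧ H.Adj v p := by
    simp only [Set.mem_insert_iff, Set.mem_singleton_iff] at hs ht
    grind
  refine hK (hasK4Minor_of_diamond hz hz' (T := {p, v})
    (induce_pair_connected_of_adj hvrp.2.symm) (by simp) ?_ ?_ ?_ ⟨v, by simp, hvrp.1.symm⟩)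
  · simp [hpr.symm, hvr.symm]
  · simp [((hz p).2 (by simp)).ne, Ne.symm hvS.2.1]
  · simp [((hz' p).2 (by simp)).ne, Ne.symm hvS.2.2.1]

theorem mem_support_contract_diamond (hK : ¬ HasK4Minor H)
    (hz : ∀ w, H.Adj z w ↔ w = r ∨ w = z' ∨ w = p)
    (hz' : ∀ w, H.Adj z' w ↔ w = r ∨ w = z ∨ w = p) (hpr : p ≠ r)
    (hp : ¬ DegreeLETwo H p) : r ∈ (contract H {r, z, z', p} r).support := by
  have hrS : r ∈ ({r, z, z', p} : Set V) := by simp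
  obtain ⟨q, hpq, hqz, hqz'⟩ := exists_ne_adj_of_not_degreeLETwo hp z z'
  have hqr : q ≠ r := by
    rintro rfl
    exact hK (hasK4Minor_of_diamond hz hz' (connected_induce_singleton H p) rfl hpr.symm
      ((hz p).2 (by simp)).ne ((hz' p).2 (by simp)).ne ⟨p, rfl, hpq.symm⟩)
  have hqS : q ∉ ({r, z, z', p} : Set V) := by simp [hqr, hqz, hqz', hpq.ne']
  exact ⟨q, ((contract_adj_root hrS hqS).2 ⟨p, by simp, hpq.symm⟩).symm⟩

/-- A smallest counterexample to the statement that a `K₄`-minor-free graph has, away from any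
prescribed non-isolated vertex `r`, a non-isolated vertex of degree at most two. -/
structure IsRootCritical (H : SimpleGraph V) (r : V) : Prop where
  not_hasK4Minor : ¬ HasK4Minor H
  not_degreeLETwo : ∀ v ∈ H.support, v ≠ r → ¬ DegreeLETwo H v
  exists_contract : ∀ {S : Set V} {s x : V}, s ∈ S → x ∈ S → x ≠ s → (H.induce S).Connected →
    r ∈ (contract H S s).support →
    ∃ v ∈ (contract H S s).support, v ≠ r ∧ DegreeLETwo (contract H S s) v ∧ ¬ DegreeLETwo H v

namespace IsRootCritical

theorem exists_triangle (hH : IsRootCritical H r) (hry : H.Adj r y) :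
    ∃ z b, b ≠ r ∧ b ≠ y ∧ ∀ w, H.Adj z w ↔ w = r ∨ w = y ∨ w = b := by
  have hrS : r ∈ ({r, y} : Set V) := by simp
  have hyS : y ∈ ({r, y} : Set V) := by simp
  obtain ⟨q, hyq, hqr, -⟩ := exists_ne_adj_of_not_degreeLETwo
    (hH.not_degreeLETwo y hry.symm.mem_support_left hry.ne') r y
  have hqS : q ∉ ({r, y} : Set V) := by simp [hqr, hyq.ne']
  obtain ⟨z, hz, hzr, hlow, hnot⟩ := hH.exists_contract hrS hyS hry.ne'
    (induce_pair_connected_of_adj hry)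
    ⟨q, ((contract_adj_root hrS hqS).2 ⟨y, hyS, hyq.symm⟩).symm⟩
  exact ⟨z, adj_iff_of_contract_edge hz hzr hlow hnot⟩

theorem exists_adjacent_triangles (hH : IsRootCritical H r) (hr : r ∈ H.support) :
    ∃ z z' p p', p ≠ r ∧ p ≠ z' ∧ p' ≠ r ∧ p' ≠ z ∧
      (∀ w, H.Adj z w ↔ w = r ∨ w = z' ∨ w = p) ∧
      ∀ w, H.Adj z' w ↔ w = r ∨ w = z ∨ w = p' := by
  obtain ⟨y, hry⟩ := hr
  obtain ⟨z', b, hbr, hby, hz'⟩ := hH.exists_triangle hry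
  obtain ⟨z, p, hpr, hpz', hz⟩ := hH.exists_triangle ((hz' r).2 (by simp)).symm
  have hzr : H.Adj z r := (hz r).2 (by simp)
  rcases (hz' z).1 ((hz z').2 (by simp)).symm with rfl | rfl | rfl
  · exact absurd rfl hzr.ne
  · exact ⟨z, z', p, b, hpr, hpz', hbr, hby, hz, hz'⟩
  · exact ⟨z, z', p, y, hpr, hpz', hry.ne', hby.symm, hz,
      fun w => by rw [hz', or_comm (a := w = y)]⟩

theorem notMem_support (hH : IsRootCritical H r) : r ∉ H.support := by
  intro hr
  obtain ⟨z, z', p, p', hpr, hpz', hpr', hpz, hz, hz'⟩ := hH.exists_adjacent_triangles hr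
  have hzz' : H.Adj z z' := (hz z').2 (by simp)
  have hzr : H.Adj z r := (hz r).2 (by simp)
  by_cases hpp : p = p'
  · subst hpp
    have hzp : H.Adj z p := (hz p).2 (by simp)
    have hz'p : H.Adj z' p := (hz' p).2 (by simp)
    have hconn : (H.induce {r, z, z', p}).Connected :=
      connected_induce_insert (connected_induce_insert (induce_pair_connected_of_adj hz'p)
        (by simp) hzz') (by simp) hzr.symm
    obtain ⟨v, hv, hvr, hlow, hnot⟩ := hH.exists_contract (x := z) (by simp) (by simp) hzr.ne
      hconn (mem_support_contract_diamond hH.not_hasK4Minor hz hz' hpr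
        (hH.not_degreeLETwo p hzp.symm.mem_support_left hpr))
    exact hnot (degreeLETwo_of_contract_diamond hH.not_hasK4Minor hz hz' hpr hv hvr hlow)
  · have hrS : r ∉ ({z, z'} : Set V) := by
      simp [hzr.ne', ((hz' r).2 (by simp)).ne']
    obtain ⟨v, hv, hvr, hlow, hnot⟩ := hH.exists_contract (s := z) (x := z') (by simp) (by simp)
      hzz'.ne' (induce_pair_connected_of_adj hzz')
      ⟨z, (contract_adj_root (by simp) hrS).2 ⟨z, by simp, hzr.symm⟩⟩
    exact hnot (degreeLETwo_of_contract_triangle_edge hz hz' hpr hpr' hpz' hpz hpp hv hvr hlow)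

end IsRootCritical

theorem exists_degreeLETwo_ne [Finite V] (hK : ¬ HasK4Minor H) (hr : r ∈ H.support) :
    ∃ v ∈ H.support, v ≠ r ∧ DegreeLETwo H v := by
  induction hn : H.support.ncard using Nat.strong_induction_on generalizing H with
  | _ n ih =>
  by_contra! hhigh
  refine IsRootCritical.notMem_support ⟨hK, hhigh, fun {S s x} hs hx hxs hS hrS => ?_⟩ hr
  have hlt := support_contract_ssubset hs hS hx hxs
  obtain ⟨v, hv, hvr, hlow⟩ := ih _ (hn ▸ Set.ncard_lt_ncard hlt (Set.toFinite _))
    (fun h => hK (h.of_contract hs hS)) hrS rfl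
  exact ⟨v, hv, hvr, hlow, hhigh v (hlt.subset hv) hvr⟩

theorem exists_adj_of_not_hasK4Minor [Finite V] (hK : ¬ HasK4Minor H) (hH : H.support.Nonempty) :
    ∃ x a b, H.Adj x a ∧ H.Adj x b ∧ ∀ c, H.Adj x c → c = a ∨ c = b := by
  obtain ⟨r, hr⟩ := hH
  obtain ⟨x, ⟨a, ha⟩, -, c, d, hcd⟩ := exists_degreeLETwo_ne hK hr
  by_cases hb : ∃ b, H.Adj x b ∧ b ≠ a
  · obtain ⟨b, hb, hba⟩ := hb
    refine ⟨x, a, b, ha, hb, fun e he => ?_⟩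
    have ha := hcd ha
    have hb := hcd hb
    have he := hcd he
    grind
  · exact ⟨x, a, a, ha, ha, fun e he => .inl (by grind)⟩

end Dirac

section Cube

variable {ι : Type*} [Fintype ι]

theorem exists_hammingDist_eq (A B : ι → ZMod 2) {a b : ℕ} (h : hammingDist A B ≤ a + b)
    (ha : a ≤ hammingDist A B + b) (hb : b ≤ hammingDist A B + a)
    (hcard : a + b + hammingDist A B ≤ 2 * Fintype.card ι)
    (hpar : (a + b) % 2 = hammingDist A B % 2) :
    ∃ Y, hammingDist Y A = a ∧ hammingDist Y B = b := by
  classical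
  let D : Finset ι := {k | A k ≠ B k}
  have hD : D.card = hammingDist A B := rfl
  obtain ⟨I, hID, hI⟩ := Finset.exists_subset_card_eq
    (s := D) (n := (a + hammingDist A B - b) / 2) (by omega)
  obtain ⟨J, hJD, hJ⟩ := Finset.exists_subset_card_eq
    (s := Dᶜ) (n := (a + b - hammingDist A B) / 2) (by rw [Finset.card_compl]; omega)
  have hdisj : Disjoint D J :=
    (disjoint_compl_right (a := D)).mono_right hJD
  let Y : ι → ZMod 2 := fun k => if k ∈ I ∪ J then A k + 1 else A k
  have hYA : ({k | Y k ≠ A k} : Finset ι) = I ∪ J := by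
    ext k
    by_cases hk : k ∈ I ∪ J <;> simp [Y, hk, -Finset.mem_union]
  have hYB : ({k | Y k ≠ B k} : Finset ι) = D \ I ∪ J := by
    ext k
    have hkI : k ∈ I → A k ≠ B k := fun h => (Finset.mem_filter.1 (hID h)).2
    have hkJ : k ∈ J → A k = B k := fun h => by simpa [D] using hJD h
    have flip : A k + 1 ≠ B k ↔ A k = B k := by
      generalize A k = s, B k = t
      decide +revert
    simp only [Y, D, Finset.mem_filter, Finset.mem_union, Finset.mem_sdiff, Finset.mem_univ,
      true_and]
    grind
  refine ⟨Y, ?_, ?_⟩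
  · rw [hammingDist, hYA, Finset.card_union_of_disjoint (hdisj.mono_left hID), hI, hJ]
    omega
  · rw [hammingDist, hYB, Finset.card_union_of_disjoint (hdisj.mono_left Finset.sdiff_subset),
      Finset.card_sdiff_of_subset hID, hI, hJ]
    omega

theorem exists_triangle_side_lengths {n d p p' q q' : ℕ} (hn : 0 < n) (hd : d ≤ n)
    (hp : n ≤ p + p') (hq : n ≤ q + q') (hpq : d ≤ p + q) (hpq' : d ≤ p' + q')
    (hpq₁ : n ≤ d + (p + q')) (hpq₂ : n ≤ d + (p' + q)) (hp_par : (p + p') % 2 = n % 2)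
    (hq_par : (q + q') % 2 = n % 2) (hpar : (p + q) % 2 = d % 2) :
    ∃ a b : ℕ, d ≤ a + b ∧ a ≤ d + b ∧ b ≤ d + a ∧ a + b + d ≤ 2 * n ∧ (a + b) % 2 = d % 2 ∧
      (a ≤ p ∧ n ≤ a + p' ∧ a % 2 = p % 2) ∧ b ≤ q ∧ n ≤ b + q' ∧ b % 2 = q % 2 := by
  obtain ⟨m, h₁, h₂, h₃, hm⟩ : ∃ m : ℤ, (n : ℤ) - p' ≤ m ∧ (d : ℤ) - q ≤ m ∧ (n : ℤ) - q' - d ≤ m ∧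
      (m = n - p' ∨ m = d - q ∨ m = n - q' - d) :=
    ⟨max (n - p') (max (d - q) (n - q' - d)), by omega⟩
  obtain ⟨a, ha₁, ha₂, ha₃, ha₄, ha₅, ha₆, ha₇, ha_par⟩ : ∃ a : ℕ, n ≤ a + p' ∧ d ≤ a + q ∧
      n ≤ a + q' + d ∧ a ≤ p ∧ a ≤ d + q ∧ a + d ≤ n + q' ∧ a ≤ n ∧ a % 2 = p % 2 := by
    by_cases hm₀ : m < 0
    · exact ⟨p % 2, by omega⟩
    · exact ⟨m.toNat, by omega⟩
  exact ⟨a, max (max (d - a) (a - d)) (n - q'), by omega⟩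

-- A point at distance at most `p` from `A` and at most `p'` from the antipode of `A`, and likewise
-- for `B`: the balls have a common point as soon as they meet pairwise and the parities agree.
theorem exists_hammingDist_le (A B : ι → ZMod 2) {p p' q q' : ℕ} (hcard : 0 < Fintype.card ι)
    (hp : Fintype.card ι ≤ p + p') (hq : Fintype.card ι ≤ q + q')
    (hpq : hammingDist A B ≤ p + q) (hpq' : hammingDist A B ≤ p' + q')
    (hpq₁ : Fintype.card ι ≤ hammingDist A B + (p + q'))
    (hpq₂ : Fintype.card ι ≤ hammingDist A B + (p' + q))
    (hp_par : (p + p') % 2 = Fintype.card ι % 2) (hq_par : (q + q') % 2 = Fintype.card ι % 2)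
    (hpar : (p + q) % 2 = hammingDist A B % 2) :
    ∃ Y, (hammingDist Y A ≤ p ∧ Fintype.card ι ≤ hammingDist Y A + p' ∧
        hammingDist Y A % 2 = p % 2) ∧
      hammingDist Y B ≤ q ∧ Fintype.card ι ≤ hammingDist Y B + q' ∧
        hammingDist Y B % 2 = q % 2 := by
  obtain ⟨a, b, hab, ha, hb, hn, hpar', haY, hbY⟩ := exists_triangle_side_lengths hcard
    hammingDist_le_card_fintype hp hq hpq hpq' hpq₁ hpq₂ hp_par hq_par hpar
  obtain ⟨Y, rfl, rfl⟩ := exists_hammingDist_eq A B hab ha hb hn hpar'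
  exact ⟨Y, haY, hbY⟩

end Cube

section Embedding

/-- Abstract form of the lengths of shortest walks of either sign in a signed graph: `D s u v` is
the distance from `u` to `v` along walks of sign `s`, and every negative closed walk has length at
least `n` and of the same parity as `n`. -/
structure IsSignedMetric (n : ℕ) (D : ℤˣ → V → V → ℕ) : Prop where
  self (u : V) : D 1 u u = 0
  symm (s : ℤˣ) (u v : V) : D s u v = D s v u
  triangle (s t : ℤˣ) (u v w : V) : D (s * t) u w ≤ D s u v + D t v w
  parity (s t : ℤˣ) (u v w : V) : D (s * t) u w % 2 = (D s u v + D t v w) % 2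
  width (u : V) : n ≤ D (-1) u u
  width_parity (u : V) : D (-1) u u % 2 = n % 2

/-- The map `x` to the `n`-cube does not increase the signed distances `D` between `u` and `v`,
where walks of negative sign are compared with the distance to the antipode, and it respects
parity. -/
structure IsShort {n : ℕ} (D : ℤˣ → V → V → ℕ) (x : V → Fin n → ZMod 2) (u v : V) : Prop where
  hammingDist_le : hammingDist (x u) (x v) ≤ D 1 u v
  le_hammingDist_add : n ≤ hammingDist (x u) (x v) + D (-1) u v
  parity : hammingDist (x u) (x v) % 2 = D 1 u v % 2

variable {n : ℕ} {D : ℤˣ → V → V → ℕ} {x : V → Fin n → ZMod 2} {a b u v w : V}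

theorem IsSignedMetric.width_le_add (hD : IsSignedMetric n D) (u v : V) :
    n ≤ D 1 u v + D (-1) u v := by
  simpa [hD.symm (-1) v u] using (hD.width u).trans (hD.triangle 1 (-1) u v u)

theorem IsSignedMetric.add_parity (hD : IsSignedMetric n D) (u v : V) :
    (D 1 u v + D (-1) u v) % 2 = n % 2 := by
  simpa [hD.symm (-1) v u, hD.width_parity] using (hD.parity 1 (-1) u v u).symm

theorem IsShort.refl (hD : IsSignedMetric n D) (x : V → Fin n → ZMod 2) (u : V) :
    IsShort D x u u :=
  ⟨by simp, (hD.width u).trans (Nat.le_add_left _ _), by simp [hD.self]⟩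

theorem IsShort.symm (hD : IsSignedMetric n D) (h : IsShort D x u v) : IsShort D x v u := by
  obtain ⟨h₁, h₂, h₃⟩ := h
  refine ⟨?_, ?_, ?_⟩ <;> rwa [hammingDist_comm, hD.symm]

theorem IsShort.exists_update [DecidableEq V] (hn : 0 < n) (hD : IsSignedMetric n D)
    (hab : IsShort D x a b) (hau : a ≠ u) (hbu : b ≠ u) :
    ∃ Y, IsShort D (Function.update x u Y) u a ∧ IsShort D (Function.update x u Y) u b := by
  obtain ⟨hle, hadd, hpar⟩ := hab
  have triangle := fun s t => hD.triangle s t a u b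
  have parity := hD.parity 1 1 a u b
  simp only [hD.symm _ a u] at triangle parity
  obtain ⟨Y, ⟨h₁, h₂, h₃⟩, h₄, h₅, h₆⟩ := exists_hammingDist_le (x a) (x b)
    (p := D 1 u a) (p' := D (-1) u a) (q := D 1 u b) (q' := D (-1) u b)
    (by simpa using hn) (by simpa using hD.width_le_add u a) (by simpa using hD.width_le_add u b)
    (hle.trans (triangle 1 1)) (by simpa using hle.trans (triangle (-1) (-1)))
    (by simpa using hadd.trans (Nat.add_le_add_left (triangle 1 (-1)) _))
    (by simpa using hadd.trans (Nat.add_le_add_left (triangle (-1) 1) _))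
    (by simpa using hD.add_parity u a) (by simpa using hD.add_parity u b)
    (hpar.trans parity).symm
  rw [Fintype.card_fin] at h₂ h₅
  refine ⟨Y, ⟨?_, ?_, ?_⟩, ⟨?_, ?_, ?_⟩⟩ <;>
    simpa only [Function.update_self, Function.update_of_ne hau, Function.update_of_ne hbu]

theorem IsShort.of_contract {H : SimpleGraph V} (hD : IsSignedMetric n D)
    (hx : ∀ v w, (contract H {u, a} a).Adj v w → IsShort D x v w)
    (hv : v ≠ u) (hw : w ≠ u) (h : H.Adj v w) : IsShort D x v w := by
  have ha : a ∈ ({u, a} : Set V) := by simp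
  obtain rfl | hva := eq_or_ne v a
  · exact (hx w v ((contract_adj_root ha (by simp [hw, h.ne'])).2 ⟨v, ha, h.symm⟩)).symm hD
  obtain rfl | hwa := eq_or_ne w a
  · exact hx v w ((contract_adj_root ha (by simp [hv, h.ne])).2 ⟨w, ha, h⟩)
  · exact hx v w ((contract_adj_of_notMem ha (by simp [hv, hva]) (by simp [hw, hwa])).2 h)

theorem IsSignedMetric.exists_isShort [Finite V] {H : SimpleGraph V} (hn : 0 < n)
    (hD : IsSignedMetric n D) (hK : ¬ HasK4Minor H) :
    ∃ x : V → Fin n → ZMod 2, ∀ u v, H.Adj u v → IsShort D x u v := by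
  classical
  induction hcard : H.support.ncard using Nat.strong_induction_on generalizing H with
  | _ m ih =>
  by_cases hH : H.support.Nonempty
  · obtain ⟨u, a, b, hua, hub, hu⟩ := exists_adj_of_not_hasK4Minor hK hH
    have hlt := support_contract_ssubset (by simp) (induce_pair_connected_of_adj hua)
      (show u ∈ {u, a} by simp) hua.ne
    have ha : a ∈ ({u, a} : Set V) := by simp
    obtain ⟨x, hx⟩ := ih _ (hcard ▸ Set.ncard_lt_ncard hlt (Set.toFinite _))
      (fun h => hK (h.of_contract ha (induce_pair_connected_of_adj hua))) rfl
    have hab : IsShort D x a b := by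
      by_cases h : b = a
      · exact h ▸ IsShort.refl hD x b
      · exact (hx b a ((contract_adj_root ha (by simp [h, hub.ne'])).2
          ⟨u, by simp, hub.symm⟩)).symm hD
    obtain ⟨Y, hYa, hYb⟩ := hab.exists_update hn hD hua.ne' hub.ne'
    have hYu : ∀ v, H.Adj u v → IsShort D (Function.update x u Y) u v := fun v huv =>
      (hu v huv).elim (fun h => h ▸ hYa) (fun h => h ▸ hYb)
    refine ⟨Function.update x u Y, fun v w hvw => ?_⟩
    obtain rfl | hv := eq_or_ne v u
    · exact hYu w hvw
    obtain rfl | hw := eq_or_ne w u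
    · exact (hYu v hvw.symm).symm hD
    obtain ⟨h₁, h₂, h₃⟩ := IsShort.of_contract hD hx hv hw hvw
    refine ⟨?_, ?_, ?_⟩ <;> simpa only [Function.update_of_ne hv, Function.update_of_ne hw]
  · exact ⟨0, fun u v huv => absurd ⟨u, huv.mem_support_left⟩ hH⟩

end Embedding

section Sign

variable {G : SimpleGraph V} {H : SimpleGraph W} {σ τ : V → V → ℤ} {π : W → W → ℤ}
  {a b c : V}

/-- `σ` is a signature of the graph `G`. Values outside the edges of `G` are only required to be
symmetric. -/
structure IsSignature (G : SimpleGraph V) (σ : V → V → ℤ) : Prop where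
  symm (u v : V) : σ u v = σ v u
  eq_one_or_neg_one {u v : V} (h : G.Adj u v) : σ u v = 1 ∨ σ u v = -1

theorem walkSign_nil (G : SimpleGraph V) (σ : V → V → ℤ) (a : V) :
    walkSign σ (Walk.nil : G.Walk a a) = 1 := by
  simp [walkSign]

theorem walkSign_cons (σ : V → V → ℤ) (h : G.Adj a b) (w : G.Walk b c) :
    walkSign σ (w.cons h) = σ a b * walkSign σ w := by
  simp [walkSign]

theorem walkSign_append (σ : V → V → ℤ) (w : G.Walk a b) (w' : G.Walk b c) :
    walkSign σ (w.append w') = walkSign σ w * walkSign σ w' := by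
  simp [walkSign]

theorem walkSign_map (π : W → W → ℤ) (f : G →g H) (w : G.Walk a b) :
    walkSign π (w.map f) = walkSign (fun u v => π (f u) (f v)) w := by
  simp [walkSign, Function.comp_def]

theorem walkSign_congr (h : ∀ u v, G.Adj u v → σ u v = τ u v) (w : G.Walk a b) :
    walkSign σ w = walkSign τ w := by
  rw [walkSign, walkSign]
  exact congrArg _ (List.map_congr_left fun d _ => h _ _ d.adj)

namespace IsSignature

theorem walkSign_reverse (hσ : IsSignature G σ) (w : G.Walk a b) :
    walkSign σ w.reverse = walkSign σ w := by
  simp [walkSign, Function.comp_def, hσ.symm]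

theorem walkSign_eq_one_or_neg_one (hσ : IsSignature G σ) (w : G.Walk a b) :
    walkSign σ w = 1 ∨ walkSign σ w = -1 := by
  induction w with
  | nil => exact .inl (walkSign_nil ..)
  | cons h w ih =>
    rw [walkSign_cons]
    rcases hσ.eq_one_or_neg_one h with h | h <;> rcases ih with ih | ih <;> simp [h, ih]

end IsSignature

/-- The signature obtained from `σ` by switching at the cut between `y ⁻¹' {true}` and
`y ⁻¹' {false}`. -/
def switching (y : V → Bool) (σ : V → V → ℤ) : V → V → ℤ := fun u v =>
  if y u = y v then σ u v else -σ u v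

theorem walkSign_switching (y : V → Bool) (σ : V → V → ℤ) (w : G.Walk a b) :
    walkSign (switching y σ) w = if y a = y b then walkSign σ w else -walkSign σ w := by
  induction w with
  | nil => simp [walkSign_nil]
  | @cons u v b h w ih =>
    rw [walkSign_cons, walkSign_cons, ih, switching]
    cases y u <;> cases y v <;> cases y b <;> simp

theorem isSignedHom_of_eq_switching {f : G →g H} (y : V → Bool)
    (h : ∀ u v, G.Adj u v → π (f u) (f v) = switching y σ u v) : IsSignedHom σ π f := by
  intro a w
  rw [walkSign_map, walkSign_congr h, walkSign_switching, if_pos rfl]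

theorem IsSignedHom.exists_eq_switching (hG : G.Connected) (hσ : IsSignature G σ)
    (hπ : IsSignature H π) {f : G →g H} (hf : IsSignedHom σ π f) :
    ∃ y : V → Bool, ∀ u v, G.Adj u v → π (f u) (f v) = switching y σ u v := by
  obtain ⟨r⟩ := hG.nonempty
  obtain ⟨p⟩ : Nonempty (∀ u, G.Walk r u) := ⟨fun u => (hG.preconnected r u).some⟩
  refine ⟨fun u => decide (walkSign π ((p u).map f) = walkSign σ (p u)), fun u v h => ?_⟩
  have hclosed := hf r ((p u).append (.cons h (p v).reverse))
  simp only [Walk.map_append, Walk.map_cons, ← Walk.reverse_map, walkSign_append, walkSign_cons,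
    hσ.walkSign_reverse, hπ.walkSign_reverse] at hclosed
  have hpv := hπ.walkSign_eq_one_or_neg_one ((p v).map f)
  have hqu := hσ.walkSign_eq_one_or_neg_one (p u)
  have hqv := hσ.walkSign_eq_one_or_neg_one (p v)
  have hπuv := hπ.eq_one_or_neg_one (f.map_adj h)
  have hσuv := hσ.eq_one_or_neg_one h
  rw [switching]
  grind

end Sign

section SignedDist

variable {G : SimpleGraph V} {σ : V → V → ℤ} {n : ℕ} {s : ℤˣ} {u v : V}

theorem gWide.even_length (hwide : gWide G σ n) {p : G.Walk u u} (hp : walkSign σ p = 1) :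
    Even p.length :=
  Nat.not_odd_iff_even.1 (hwide.1 u p (by simp [hp]))

theorem exists_walkSign_eq (hG : G.Connected) (hσ : IsSignature G σ)
    (hneg : ∃ (a : V) (w : G.Walk a a), walkSign σ w < 0) (s : ℤˣ) (u v : V) :
    ∃ p : G.Walk u v, walkSign σ p = s := by
  obtain ⟨a, c, hc⟩ := hneg
  obtain ⟨p⟩ := hG.preconnected u a
  obtain ⟨q⟩ := hG.preconnected a v
  have hc' : walkSign σ c = -1 := by
    have := hσ.walkSign_eq_one_or_neg_one c
    omega
  have hpq := hσ.walkSign_eq_one_or_neg_one (p.append q)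
  have hpcq : walkSign σ (p.append (c.append q)) = -walkSign σ (p.append q) := by
    simp [walkSign_append, hc']
  by_cases h : walkSign σ (p.append q) = s
  · exact ⟨_, h⟩
  · refine ⟨p.append (c.append q), ?_⟩
    rcases Int.units_eq_one_or s with rfl | rfl <;>
      simp only [Units.val_neg, Units.val_one] at * <;> omega

/-- The length of a shortest walk of sign `s` from `u` to `v`; it is `0` if there is no such
walk. -/
noncomputable def signedDist (G : SimpleGraph V) (σ : V → V → ℤ) (s : ℤˣ) (u v : V) : ℕ :=
  sInf {n | ∃ p : G.Walk u v, p.length = n ∧ walkSign σ p = s}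

theorem signedDist_le (p : G.Walk u v) (hp : walkSign σ p = s) :
    signedDist G σ s u v ≤ p.length :=
  Nat.sInf_le ⟨p, rfl, hp⟩

theorem exists_length_eq_signedDist (hG : G.Connected) (hσ : IsSignature G σ)
    (hneg : ∃ (a : V) (w : G.Walk a a), walkSign σ w < 0) (s : ℤˣ) (u v : V) :
    ∃ p : G.Walk u v, p.length = signedDist G σ s u v ∧ walkSign σ p = s :=
  let ⟨p, hp⟩ := exists_walkSign_eq hG hσ hneg s u v
  Nat.sInf_mem (s := {n | ∃ p : G.Walk u v, p.length = n ∧ walkSign σ p = s}) ⟨_, p, rfl, hp⟩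

theorem gWide.isSignedMetric (hwide : gWide G σ n) (hG : G.Connected) (hσ : IsSignature G σ)
    (hneg : ∃ (a : V) (w : G.Walk a a), walkSign σ w < 0) : IsSignedMetric n (signedDist G σ) := by
  have hwalk := exists_length_eq_signedDist hG hσ hneg
  have symm_le : ∀ s u v, signedDist G σ s u v ≤ signedDist G σ s v u := by
    intro s u v
    obtain ⟨p, hp, hs⟩ := hwalk s v u
    simpa [hp] using signedDist_le p.reverse ((hσ.walkSign_reverse p).trans hs)
  refine ⟨fun u => ?_, fun s u v => (symm_le s u v).antisymm (symm_le s v u), ?_, ?_, ?_, ?_⟩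
  · simpa using signedDist_le (s := 1) (Walk.nil : G.Walk u u) (walkSign_nil G σ u)
  · intro s t u v w
    obtain ⟨p, hp, hs⟩ := hwalk s u v
    obtain ⟨q, hq, ht⟩ := hwalk t v w
    simpa [hp, hq] using
      signedDist_le (p.append q) (s := s * t) (by simp [walkSign_append, hs, ht])
  · intro s t u v w
    obtain ⟨p, hp, hs⟩ := hwalk s u v
    obtain ⟨q, hq, ht⟩ := hwalk t v w
    obtain ⟨r, hr, hst⟩ := hwalk (s * t) u w
    have hclosed : Even ((p.append q).append r.reverse).length := by
      refine hwide.even_length ?_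
      rw [walkSign_append, walkSign_append, hσ.walkSign_reverse, hs, ht, hst]
      norm_cast
      simp
    simp only [Walk.length_append, Walk.length_reverse, hp, hq, hr] at hclosed
    grind
  · intro u
    obtain ⟨p, hp, hs⟩ := hwalk (-1) u u
    exact hp ▸ (hwide.2 u p (by simp [hs])).1
  · intro u
    obtain ⟨p, hp, hs⟩ := hwalk (-1) u u
    have := (hwide.2 u p (by simp [hs])).2
    grind

end SignedDist

section Packing

variable {G : SimpleGraph V} {σ : V → V → ℤ} {n : ℕ} {u v : V}

theorem exists_eq_iff_ne_of_hammingDist_eq_one {ι : Type*} [Fintype ι] {x y : ι → ZMod 2}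
    (h : hammingDist x y = 1) : ∃ i, ∀ j, x j = y j ↔ j ≠ i := by
  obtain ⟨i, hi⟩ := Finset.card_eq_one.1 h
  exact ⟨i, fun j => by simpa [not_iff_comm] using (Finset.ext_iff.1 hi j).not⟩

theorem exists_eq_iff_of_hammingDist_add_one {ι : Type*} [Fintype ι] {x y : ι → ZMod 2}
    (h : hammingDist x y + 1 = Fintype.card ι) : ∃ i, ∀ j, x j = y j ↔ j = i := by
  have hcard := Finset.card_filter_add_card_filter_not (s := Finset.univ) fun j => x j ≠ y j
  obtain ⟨i, hi⟩ := Finset.card_eq_one.1 (Nat.add_left_cancel (hcard.trans h.symm))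
  exact ⟨i, fun j => by simpa using Finset.ext_iff.1 hi j⟩

theorem hammingDist_eq_of_isShort (hwide : gWide G σ n) (hG : G.Connected) (hσ : IsSignature G σ)
    (hneg : ∃ (a : V) (w : G.Walk a a), walkSign σ w < 0) {x : V → Fin n → ZMod 2}
    (hx : IsShort (signedDist G σ) x u v) (h : G.Adj u v) :
    σ u v = 1 ∧ hammingDist (x u) (x v) = 1 ∨ σ u v = -1 ∧ hammingDist (x u) (x v) + 1 = n := by
  have hle : ∀ s : ℤˣ, σ u v = s → signedDist G σ s u v = 1 := by
    intro s hs
    refine le_antisymm (signedDist_le h.toWalk (by simp [walkSign, hs])) ?_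
    obtain ⟨p, hp, -⟩ := exists_length_eq_signedDist hG hσ hneg s u v
    by_contra! hlt
    exact h.ne (Walk.eq_of_length_eq_zero (p := p) (by omega))
  have hcard : hammingDist (x u) (x v) ≤ n := by
    simpa using hammingDist_le_card_fintype (x := x u) (y := x v)
  have hadd := (hwide.isSignedMetric hG hσ hneg).add_parity u v
  obtain ⟨h₁, h₂, h₃⟩ := hx
  rcases hσ.eq_one_or_neg_one h with hs | hs
  · have := hle 1 hs
    exact .inl ⟨hs, by omega⟩
  · have := hle (-1) hs
    exact .inr ⟨hs, by omega⟩

-- Switching at the `j`-th coordinate of `x` makes exactly the edges with `i = j` negative, so `x`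
-- packs `n` disjoint signatures equivalent to `σ`.
theorem gWide.exists_packing [Finite V] (hn : 0 < n) (hwide : gWide G σ n) (hG : G.Connected)
    (hσ : IsSignature G σ) (hneg : ∃ (a : V) (w : G.Walk a a), walkSign σ w < 0)
    (hK : ¬ HasK4Minor G) :
    ∃ x : V → Fin n → ZMod 2, ∀ u v, G.Adj u v →
      ∃ i, ∀ j, x u j = x v j ↔ (j = i ↔ σ u v = -1) := by
  obtain ⟨x, hx⟩ := (hwide.isSignedMetric hG hσ hneg).exists_isShort hn hK
  refine ⟨x, fun u v h => ?_⟩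
  rcases hammingDist_eq_of_isShort hwide hG hσ hneg (hx u v h) h with ⟨hs, hd⟩ | ⟨hs, hd⟩
  · simpa [hs] using exists_eq_iff_ne_of_hammingDist_eq_one hd
  · simpa [hs] using exists_eq_iff_of_hammingDist_add_one (hd.trans (Fintype.card_fin n).symm)

end Packing

section ProjectiveCube

variable {ι : Type*} [Fintype ι] {k : ℕ}

theorem hammingDist_add_hammingDist_mod_two (p q r : ι → ZMod 2) :
    (hammingDist p q + hammingDist q r) % 2 = hammingDist p r % 2 := by
  have hcast : ∀ x y : ι → ZMod 2, (hammingDist x y : ZMod 2) = ∑ j, (x j + y j) := by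
    intro x y
    rw [hammingDist, Finset.card_filter, Nat.cast_sum]
    refine Finset.sum_congr rfl fun j _ => ?_
    generalize x j = a, y j = b
    decide +revert
  refine (ZMod.natCast_eq_natCast_iff' _ _ 2).1 ?_
  rw [Nat.cast_add, hcast, hcast, hcast, ← Finset.sum_add_distrib]
  refine Finset.sum_congr rfl fun j _ => ?_
  generalize p j = a, q j = b, r j = c
  decide +revert

theorem hammingDist_add_hammingDist_of_eq_card {p p' : ι → ZMod 2}
    (h : hammingDist p p' = Fintype.card ι) (q : ι → ZMod 2) :
    hammingDist p q + hammingDist p' q = Fintype.card ι := by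
  have hne : ∀ j, p j ≠ p' j := by
    simpa [hammingDist, Finset.card_eq_iff_eq_univ, Finset.filter_eq_self] using h
  have hcompl : ∀ j, p' j ≠ q j ↔ ¬ p j ≠ q j := by
    intro j
    have := hne j
    generalize p j = a, p' j = b, q j = c at *
    decide +revert
  simp only [hammingDist, hcompl]
  exact Finset.card_filter_add_card_filter_not _

theorem isSignature_spcSign (k : ℕ) : IsSignature (spcGraph k) (spcSign k) :=
  ⟨spcSign_symm k, fun {u v} _ => by
    rw [spcSign]
    split_ifs <;> simp⟩

theorem walk_spcGraph_bounds {p q : Fin k → ZMod 2} (w : (spcGraph k).Walk p q) :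
    (walkSign (spcSign k) w = 1 →
      hammingDist p q ≤ w.length ∧ w.length % 2 = hammingDist p q % 2) ∧
    (walkSign (spcSign k) w = -1 →
      k + 1 ≤ w.length + hammingDist p q ∧ (w.length + hammingDist p q) % 2 = (k + 1) % 2) := by
  induction w with
  | nil => simp [walkSign_nil]
  | @cons p p' q h w ih =>
    have hsign := (isSignature_spcSign k).walkSign_eq_one_or_neg_one w
    have hpar := hammingDist_add_hammingDist_mod_two p p' q
    rw [walkSign_cons, spcSign, Walk.length_cons]
    by_cases hk : hammingDist p p' = k
    · have hanti := hammingDist_add_hammingDist_of_eq_card (q := q) (hk.trans (by simp))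
      rw [Fintype.card_fin] at hanti
      rw [if_pos hk]
      omega
    · have hone := h.2.resolve_right hk
      have h₁ := hammingDist_triangle p p' q
      have h₂ := hammingDist_triangle_left p' q p
      rw [if_neg hk]
      omega

theorem gWide_spcGraph (k : ℕ) : gWide (spcGraph k) (spcSign k) (k + 1) := by
  have hsign {p} := (isSignature_spcSign k).walkSign_eq_one_or_neg_one (a := p) (b := p)
  refine ⟨fun p w hw => ?_, fun p w hw => ?_⟩
  · have := (walk_spcGraph_bounds w).1 (by have := hsign w; omega)
    rw [hammingDist_self] at this
    grind
  · have := (walk_spcGraph_bounds w).2 (by have := hsign w; omega)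
    rw [hammingDist_self] at this
    grind

-- The edge of colour `i` in `EDC(SPC(k))`: colour `0` is given to the edges `v⁺v⁻`, colour `1` to
-- the negative edges of `SPC(k)` and colour `j + 2` to the edges flipping the `j`-th coordinate.
theorem EDCsg_spcGraph_adj_of_colour (hk : 2 ≤ k) (i : Fin (k + 2)) {p q : Fin k → ZMod 2}
    {s t : Bool} (hpq : ∀ j : Fin k, p j = q j ↔ (j.succ.succ = i ↔ 1 = i))
    (hst : s = t ↔ (0 = i ↔ 1 = i)) :
    (EDCsg (spcGraph k) (spcSign k) (spcSign_symm k)).Adj (p, s) (q, t) ∧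
      edcSign (p, s) (q, t) = if 0 = i then -1 else 1 := by
  have succ_ne (j : Fin k) : j.succ.succ ≠ 1 := fun h => Fin.succ_ne_zero j (Fin.succ_injective _ h)
  have spc_adj {d : ℕ} (hd : hammingDist p q = d) (hd₀ : 0 < d) (hd₁ : d = 1 ∨ d = k) :
      p ≠ q ∧ (spcGraph k).Adj p q := by
    have hpq : p ≠ q := hammingDist_pos.1 (by omega)
    exact ⟨hpq, hpq, by omega⟩
  induction i using Fin.cases with
  | zero =>
    have hpq : p = q := funext fun j => (hpq j).2 (by simp)
    exact ⟨.inl ⟨hpq, by simp [hst]⟩, by simp [edcSign, hpq]⟩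
  | succ i =>
    induction i using Fin.cases with
    | zero =>
      have hd : hammingDist p q = k := by
        rw [hammingDist, Finset.filter_true_of_mem, Finset.card_univ, Fintype.card_fin]
        intro j _
        simp [hpq, succ_ne]
      obtain ⟨hne, hadj⟩ := spc_adj hd (by omega) (by simp)
      exact ⟨.inr ⟨hadj, by simp [hst, spcSign, hd]⟩, by simp [edcSign, hne]⟩
    | succ i =>
      have hd : hammingDist p q = 1 := by
        refine Finset.card_eq_one.2 ⟨i, Finset.ext fun j => ?_⟩
        simp [hpq, (succ_ne i).symm]
      obtain ⟨hne, hadj⟩ := spc_adj hd (by omega) (by simp)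
      have hst : s = t := hst.2 (by simp [(succ_ne i).symm, (Fin.succ_ne_zero _).symm])
      have hk : 1 ≠ k := by omega
      exact ⟨.inr ⟨hadj, by simp [hst, spcSign, hd, hk]⟩,
        by simp [edcSign, hne, (Fin.succ_ne_zero _).symm]⟩

theorem gWide.exists_isSignedHom_EDCsg_spcGraph [Finite V] {G : SimpleGraph V} {σ : V → V → ℤ}
    (hk : 2 ≤ k) (hwide : gWide G σ (k + 2)) (hG : G.Connected) (hσ : IsSignature G σ)
    (hneg : ∃ (a : V) (w : G.Walk a a), walkSign σ w < 0) (hK : ¬ HasK4Minor G) :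
    ∃ F : G →g EDCsg (spcGraph k) (spcSign k) (spcSign_symm k), IsSignedHom σ edcSign F := by
  obtain ⟨x, hx⟩ := hwide.exists_packing (by omega) hG hσ hneg hK
  let F (u : V) : (Fin k → ZMod 2) × Bool :=
    (fun j => x u j.succ.succ + x u 1, decide (x u 0 = x u 1))
  have add_eq_add_iff (a b c d : ZMod 2) : a + b = c + d ↔ (a = c ↔ b = d) := by decide +revert
  have decide_eq_iff (a b c d : ZMod 2) :
      decide (a = b) = decide (c = d) ↔ (a = c ↔ b = d) := by decide +revert
  have hF : ∀ u v, G.Adj u v →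
      (EDCsg (spcGraph k) (spcSign k) (spcSign_symm k)).Adj (F u) (F v) ∧
        edcSign (F u) (F v) = switching (fun u => decide (x u 0 = 0)) σ u v := by
    intro u v huv
    obtain ⟨i, hi⟩ := hx u v huv
    obtain ⟨hadj, hsign⟩ := EDCsg_spcGraph_adj_of_colour hk i (p := (F u).1) (q := (F v).1)
      (s := (F u).2) (t := (F v).2)
      (fun j => by rw [add_eq_add_iff, hi, hi]; tauto) (by rw [decide_eq_iff, hi, hi]; tauto)
    refine ⟨hadj, hsign.trans ?_⟩
    have hs := hσ.eq_one_or_neg_one huv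
    simp only [switching, decide_eq_iff, hi]
    grind
  exact ⟨⟨F, fun huv => (hF _ _ huv).1⟩,
    isSignedHom_of_eq_switching _ fun u v huv => (hF u v huv).2⟩

end ProjectiveCube

section Quotient

theorem preconnected_map {G : SimpleGraph V} {q : V → W} (hG : G.Preconnected)
    (hq : q.Surjective) : (G.map q).Preconnected := by
  have of_walk : ∀ {u v : V}, G.Walk u v → (G.map q).Reachable (q u) (q v) := by
    intro u v w
    induction w with
    | nil => rfl
    | @cons u v w h _ ih =>
      by_cases huv : q u = q v
      · exact huv ▸ ih
      · exact Adj.reachable ((map_adj' ..).2 ⟨huv, u, v, h, rfl, rfl⟩) |>.trans ih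
  intro a b
  obtain ⟨u, rfl⟩ := hq a
  obtain ⟨v, rfl⟩ := hq b
  exact of_walk (hG u v).some

-- The monotone-light factorization of `f`: contract the components of its fibres.
theorem exists_monotone_light_factorization.{u, v} {V : Type u} {U : Type v}
    {G : SimpleGraph V} {C : SimpleGraph U}
    {f : V → U} (hf : ∀ u v, G.Adj u v → f u = f v ∨ C.Adj (f u) (f v)) :
    ∃ (Q : Type u) (q : V → Q) (ψ : G.map q →g C), q.Surjective ∧
      (∀ p, (G.induce (q ⁻¹' {p})).Preconnected) ∧ ∀ u, ψ (q u) = f u := by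
  let L : SimpleGraph V :=
    { Adj u v := G.Adj u v ∧ f u = f v
      symm.symm u v h := ⟨h.1.symm, h.2.symm⟩
      loopless.irrefl u h := h.1.ne rfl }
  have hfL : ∀ u v, L.Walk u v → f u = f v := by
    intro u v w
    induction w with
    | nil => rfl
    | cons h _ ih => exact h.2.trans ih
  let ψ : L.ConnectedComponent → U := ConnectedComponent.lift f fun u v w _ => hfL u v w
  refine ⟨L.ConnectedComponent, L.connectedComponentMk, ⟨ψ, ?_⟩, Quot.mk_surjective, ?_,
    fun u => rfl⟩
  · rintro p q ⟨hne, u, v, huv, rfl, rfl⟩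
    exact (hf u v huv).resolve_left
      fun h => hne (ConnectedComponent.connectedComponentMk_eq_of_adj ⟨huv, h⟩)
  · intro p
    have hLG : L ≤ G := fun _ _ h => h.1
    exact p.connected_toSimpleGraph.preconnected.mono (comap_monotone _ hLG)

end Quotient

section Girth

variable {G : SimpleGraph V} {H : SimpleGraph W} {σ : V → V → ℤ} {π : W → W → ℤ} {n : ℕ}

theorem forall_sGirth_le_iff : (∀ neg odd, sGirth H π neg odd ≤ sGirth G σ neg odd) ↔
    ∀ (a : V) (w : G.Walk a a), ∃ (b : W) (w' : H.Walk b b), w'.length ≤ w.length ∧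
      (walkSign π w' < 0 ↔ walkSign σ w < 0) ∧ (Odd w'.length ↔ Odd w.length) := by
  constructor
  · intro h a w
    have hle : sGirth H π (decide (walkSign σ w < 0)) (decide (Odd w.length)) ≤ w.length :=
      (h _ _).trans (sInf_le ⟨a, w, rfl, by simp, by simp⟩)
    obtain ⟨_, ⟨b, w', rfl, hneg, hodd⟩, hw'⟩ :=
      sInf_lt_iff.1 (hle.trans_lt (ENat.natCast_lt_natCast.2 w.length.lt_succ_self))
    exact ⟨b, w', Nat.lt_succ_iff.1 (ENat.natCast_lt_natCast.1 hw'), by simpa using hneg,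
      by simpa using hodd⟩
  · intro h neg odd
    refine le_sInf ?_
    rintro _ ⟨a, w, rfl, hneg, hodd⟩
    obtain ⟨b, w', hle, hneg', hodd'⟩ := h a w
    calc
      sGirth H π neg odd ≤ w'.length := sInf_le ⟨b, w', rfl, hneg'.trans hneg, hodd'.trans hodd⟩
      _ ≤ w.length := by exact_mod_cast hle

theorem sGirth_le_of_isSignedHom {f : G →g H} (hf : IsSignedHom σ π f) (neg odd : Bool) :
    sGirth H π neg odd ≤ sGirth G σ neg odd :=
  forall_sGirth_le_iff.2 (fun a w => ⟨f a, w.map f, by simp, by simp [hf a w], by simp⟩) neg odd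

theorem gWide.of_sGirth_le (hwide : gWide H π n) (hπ : IsSignature H π)
    (h : ∀ neg odd, sGirth H π neg odd ≤ sGirth G σ neg odd) : gWide G σ n := by
  rw [forall_sGirth_le_iff] at h
  refine ⟨fun a w hw hodd => ?_, fun a w hw => ?_⟩
  · obtain ⟨b, w', -, hneg', hodd'⟩ := h a w
    have := hπ.walkSign_eq_one_or_neg_one w'
    exact hwide.1 b w' (by omega) (hodd'.2 hodd)
  · obtain ⟨b, w', hle, hneg', hodd'⟩ := h a w
    obtain ⟨h₁, h₂⟩ := hwide.2 b w' (hneg'.2 hw)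
    exact ⟨h₁.trans hle, hodd'.symm.trans h₂⟩

theorem gWide.sGirth_le_sGirth (hwide : gWide G σ n) (hσ : IsSignature G σ) {b : W}
    (c : H.Walk b b) (hc : walkSign π c < 0) (hn : c.length = n) (neg odd : Bool) :
    sGirth H π neg odd ≤ sGirth G σ neg odd := by
  refine forall_sGirth_le_iff.2 (fun a w => ?_) neg odd
  rcases hσ.walkSign_eq_one_or_neg_one w with hw | hw
  · have := hwide.1 a w (by omega)
    exact ⟨b, .nil, by simp, by simp [walkSign_nil, hw], by simpa using this⟩
  · obtain ⟨hle, hodd⟩ := hwide.2 a w (by omega)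
    exact ⟨b, c, hn.trans_le hle, by omega, by rw [hn, hodd]⟩

theorem IsSignature.three_le_length (hσ : IsSignature G σ) {a : V} (w : G.Walk a a)
    (hw : walkSign σ w < 0) : 3 ≤ w.length := by
  match w with
  | .nil => simp [walkSign_nil] at hw
  | .cons h .nil => exact absurd rfl h.ne
  | .cons (v := b) h (.cons h' .nil) =>
    rw [walkSign_cons, walkSign_cons, walkSign_nil, hσ.symm b a] at hw
    nlinarith [mul_self_nonneg (σ a b)]
  | .cons _ (.cons _ (.cons _ _)) => simp

theorem gWide.exists_length_eq (hwide : gWide G σ n)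
    (hneg : ∃ (a : V) (w : G.Walk a a), walkSign σ w < 0) :
    ∃ m, gWide G σ m ∧ ∃ (a : V) (w : G.Walk a a), walkSign σ w < 0 ∧ w.length = m := by
  classical
  have hex : ∃ m, ∃ (a : V) (w : G.Walk a a), walkSign σ w < 0 ∧ w.length = m :=
    let ⟨a, w, hw⟩ := hneg
    ⟨_, a, w, hw, rfl⟩
  obtain ⟨a, w, hw, hm⟩ := Nat.find_spec hex
  refine ⟨Nat.find hex, ⟨hwide.1, fun b c hc => ⟨Nat.find_min' hex ⟨b, c, hc, rfl⟩, ?_⟩⟩,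
    a, w, hw, hm⟩
  rw [(hwide.2 b c hc).2, ← hm, (hwide.2 a w hw).2]

end Girth

section ExtendedDoubleCover

variable {B : SimpleGraph W} {π : W → W → ℤ} {hsymm : ∀ u v, π u v = π v u} {n : ℕ}

theorem isSignature_edcSign (B : SimpleGraph W) (π : W → W → ℤ) (hsymm : ∀ u v, π u v = π v u) :
    IsSignature (EDCsg B π hsymm) edcSign :=
  ⟨fun x y => by grind [edcSign], fun {x y} _ => by
    rw [edcSign]
    split_ifs <;> simp⟩

-- `t` counts the edges `v⁺v⁻` of the walk.
theorem exists_walk_of_walk_EDCsg (hπ : IsSignature B π) {x y : W × Bool}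
    (w : (EDCsg B π hsymm).Walk x y) : ∃ (p : B.Walk x.1 y.1) (t : ℕ),
      w.length = p.length + t ∧ walkSign edcSign w = (-1) ^ t ∧
        walkSign π p = if x.2 = y.2 then (-1) ^ t else -(-1) ^ t := by
  induction w with
  | nil => exact ⟨.nil, 0, by simp [walkSign_nil]⟩
  | @cons x y z h w ih =>
    obtain ⟨p, t, hlen, hw, hp⟩ := ih
    obtain ⟨x, s⟩ := x
    obtain ⟨y, s'⟩ := y
    obtain ⟨z, r⟩ := z
    rw [Walk.length_cons, walkSign_cons, hlen, hw]
    rcases h with ⟨rfl : x = y, hs : s ≠ s'⟩ | ⟨hxy, hs⟩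
    · refine ⟨p, t + 1, by rw [add_assoc], by simp [edcSign, pow_succ], ?_⟩
      cases s <;> cases s' <;> cases r <;> simp_all [pow_succ]
    · refine ⟨p.cons hxy, t, by rw [Walk.length_cons, add_right_comm],
        by simp [edcSign, hxy.ne], ?_⟩
      rw [walkSign_cons, hp]
      rcases hπ.eq_one_or_neg_one hxy with h | h <;>
        cases s <;> cases s' <;> cases r <;> simp_all

theorem gWide_EDCsg (hwide : gWide B π n) (hπ : IsSignature B π) :
    gWide (EDCsg B π hsymm) edcSign (n + 1) := by
  refine ⟨fun x w hw => ?_, fun x w hw => ?_⟩ <;>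
    obtain ⟨p, t, hlen, ht, hp⟩ := exists_walk_of_walk_EDCsg hπ w <;>
    rw [if_pos rfl] at hp
  · have ht_even : Even t := by
      by_contra h
      rw [ht, (Nat.not_even_iff_odd.1 h).neg_one_pow] at hw
      omega
    have := hwide.even_length (hp.trans ht_even.neg_one_pow)
    grind
  · have ht_odd : Odd t := by
      by_contra h
      rw [ht, (Nat.not_odd_iff_even.1 h).neg_one_pow] at hw
      omega
    have := hwide.2 x.1 p (by simp [hp, ht_odd.neg_one_pow])
    have := ht_odd.pos
    grind

theorem exists_negative_walk_of_EDCsg (hπ : IsSignature B π) {x : W × Bool}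
    (w : (EDCsg B π hsymm).Walk x x) (hw : walkSign edcSign w < 0) :
    ∃ (b : W) (p : B.Walk b b), walkSign π p < 0 := by
  obtain ⟨p, t, -, ht, hp⟩ := exists_walk_of_walk_EDCsg hπ w
  exact ⟨x.1, p, by rwa [hp, if_pos rfl, ← ht]⟩

theorem walkSign_edcSign_of_fst_const {G : SimpleGraph V} {F : G →g EDCsg B π hsymm} {b : W}
    (hF : ∀ u, (F u).1 = b) {u v : V} (w : G.Walk u v) :
    walkSign edcSign (w.map F) = (-1) ^ w.length := by
  rw [walkSign_map, walkSign]
  simp [edcSign, hF]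

theorem exists_isSignedHom_EDCsg_of_even {G : SimpleGraph V} {σ : V → V → ℤ} (b : W)
    (hpos : ∀ (a : V) (w : G.Walk a a), walkSign σ w = 1)
    (heven : ∀ (a : V) (w : G.Walk a a), Even w.length) :
    ∃ f : G →g EDCsg B π hsymm, IsSignedHom σ edcSign f := by
  obtain ⟨c⟩ := two_colorable_iff_forall_loop_even.2 heven
  let F : G →g EDCsg B π hsymm :=
    { toFun u := (b, decide (c u = 0))
      map_rel' {u v} h := .inl ⟨rfl, by have := c.valid h; grind⟩ }
  refine ⟨F, fun a w => ?_⟩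
  rw [walkSign_edcSign_of_fst_const (F := F) (b := b) (fun _ => rfl), hpos, (heven a w).neg_one_pow]

theorem EDCsg_adj_and_edcSign_eq {U : Type*} {C : SimpleGraph U} {γ : U → U → ℤ}
    {hγsymm : ∀ u v, γ u v = γ v u} (hγ : IsSignature C γ) {p r : U × Bool} {a b : W} {s t : Bool}
    (hpr : (EDCsg C γ hγsymm).Adj p r) (heq : p.1 = r.1 → a = b ∧ s = t)
    (hadj : C.Adj p.1 r.1 → B.Adj a b ∧ π a b = if s = t then γ p.1 r.1 else -γ p.1 r.1) :
    (EDCsg B π hsymm).Adj (a, p.2 ^^ s) (b, r.2 ^^ t) ∧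
      edcSign (a, p.2 ^^ s) (b, r.2 ^^ t) = edcSign p r := by
  rcases hpr with ⟨h₁, h₂⟩ | ⟨h₁, h₂⟩
  · obtain ⟨rfl, rfl⟩ := heq h₁
    exact ⟨.inl ⟨rfl, by simpa using h₂⟩, by simp [edcSign, h₁]⟩
  · obtain ⟨hab, hπ⟩ := hadj h₁
    refine ⟨.inr ⟨hab, ?_⟩, by simp [edcSign, h₁.ne, hab.ne]⟩
    obtain ⟨_, i⟩ := p
    obtain ⟨_, j⟩ := r
    rcases hγ.eq_one_or_neg_one h₁ with h | h <;>
      cases i <;> cases j <;> cases s <;> cases t <;> simp_all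

theorem SPComplete.exists_isSignedHom_EDCsg {V : Type} [Finite V] {U : Type*} {G : SimpleGraph V}
    {σ : V → V → ℤ} {C : SimpleGraph U} {γ : U → U → ℤ} {hγsymm : ∀ u v, γ u v = γ v u}
    (hSP : SPComplete B π) (hπ : IsSignature B π) (hγ : IsSignature C γ) (hG : G.Connected)
    (hK : ¬ HasK4Minor G) (hle : ∀ neg odd, sGirth B π neg odd ≤ sGirth C γ neg odd)
    {F : G →g EDCsg C γ hγsymm} (hF : IsSignedHom σ edcSign F) :
    ∃ f : G →g EDCsg B π hsymm, IsSignedHom σ edcSign f := by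
  obtain ⟨Q, q, ψ, hq, hfib, hψ⟩ := exists_monotone_light_factorization (C := C)
    (f := fun u => (F u).1) fun u v h => (F.map_adj h).imp And.left And.left
  have := Finite.of_surjective q hq
  have hconn : (G.map q).Connected :=
    (connected_iff _).2 ⟨preconnected_map hG.preconnected hq, hG.nonempty.map q⟩
  let τ (a b : Q) : ℤ := γ (ψ a) (ψ b)
  have hτ : IsSignature (G.map q) τ :=
    ⟨fun a b => hγsymm _ _, fun h => hγ.eq_one_or_neg_one (ψ.map_adj h)⟩
  have hψ_hom : IsSignedHom τ γ ψ := fun a w => walkSign_map γ ψ w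
  obtain ⟨φ, hφ⟩ := hSP Q (G.map q) τ this hτ.symm (fun _ _ => hτ.eq_one_or_neg_one) hconn
    (fun h => hK (h.of_map hfib)) fun neg odd =>
      (hle neg odd).trans (sGirth_le_of_isSignedHom hψ_hom neg odd)
  obtain ⟨y, hy⟩ := hφ.exists_eq_switching hconn hτ hπ
  let f (u : V) : W × Bool := (φ (q u), (F u).2 ^^ y (q u))
  have hf : ∀ u v, G.Adj u v → (EDCsg B π hsymm).Adj (f u) (f v) ∧
      edcSign (f u) (f v) = edcSign (F u) (F v) := by
    intro u v huv
    have hquv (h : q u ≠ q v) : (G.map q).Adj (q u) (q v) := ⟨h, u, v, huv, rfl, rfl⟩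
    refine EDCsg_adj_and_edcSign_eq hγ (F.map_adj huv) (fun h => ?_) (fun h => ?_)
    · have hqeq : q u = q v := by
        by_contra hne
        exact (ψ.map_adj (hquv hne)).ne (by rw [hψ, hψ, h])
      exact ⟨congrArg φ hqeq, congrArg y hqeq⟩
    · have hadj := hquv fun hqeq => h.ne (by rw [← hψ, ← hψ, hqeq])
      exact ⟨φ.map_adj hadj, by simpa only [switching, τ, hψ] using hy _ _ hadj⟩
  refine ⟨⟨f, fun h => (hf _ _ h).1⟩, fun a w => ?_⟩
  rw [← hF a w, walkSign_map, walkSign_map]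
  exact walkSign_congr (fun u v h => (hf u v h).2) w

end ExtendedDoubleCover

theorem EDC_SPComplete_general {W : Type*} (B : SimpleGraph W) (π : W → W → ℤ)
    (hsymm : ∀ u v, π u v = π v u) (hpm : ∀ u v, B.Adj u v → π u v = 1 ∨ π u v = -1)
    {g : ℕ} (hwide : gWide B π g) (hSP : SPComplete B π) :
    SPComplete (EDCsg B π hsymm) edcSign := by
  intro V G σ _ hsymm' hpm' hG hK hle
  have hσ : IsSignature G σ := ⟨hsymm', fun h => hpm' _ _ h⟩
  have hπ : IsSignature B π := ⟨hsymm, fun h => hpm _ _ h⟩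
  have hEDC := isSignature_edcSign B π hsymm
  have hclosed := forall_sGirth_le_iff.1 hle
  by_cases hneg : ∃ (a : V) (w : G.Walk a a), walkSign σ w < 0
  · obtain ⟨a, w, hw⟩ := hneg
    obtain ⟨x, w', -, hw', -⟩ := hclosed a w
    obtain ⟨n, hn, b, c, hc, hlen⟩ :=
      hwide.exists_length_eq (exists_negative_walk_of_EDCsg hπ w' (hw'.2 hw))
    obtain ⟨k, rfl⟩ : ∃ k, n = k + 1 := Nat.exists_eq_succ_of_ne_zero (by
      have := hπ.three_le_length c hc; omega)
    have hk : 2 ≤ k := by have := hπ.three_le_length c hc; omega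
    have hG_wide : gWide G σ (k + 2) := (gWide_EDCsg hn hπ).of_sGirth_le hEDC hle
    obtain ⟨F, hF⟩ := hG_wide.exists_isSignedHom_EDCsg_spcGraph hk hG hσ ⟨a, w, hw⟩ hK
    exact hSP.exists_isSignedHom_EDCsg hπ (isSignature_spcSign k) hG hK
      ((gWide_spcGraph k).sGirth_le_sGirth (isSignature_spcSign k) c hc hlen) hF
  · have hpos (a : V) (w : G.Walk a a) : walkSign σ w = 1 :=
      (hσ.walkSign_eq_one_or_neg_one w).resolve_right fun h => hneg ⟨a, w, by omega⟩
    obtain ⟨x, -⟩ := hclosed hG.nonempty.some .nil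
    have hG_wide := (gWide_EDCsg hwide hπ).of_sGirth_le hEDC hle
    exact exists_isSignedHom_EDCsg_of_even x.1 hpos fun a w => hG_wide.even_length (hpos a w)

/-- main theorem for `K₄`-minor-free graphs: if a `g`-wide signed
graph `(B,π)` is SP-complete, then so is its Extended Double Cover. -/
theorem EDC_SPComplete {W : Type} [Fintype W]
    (B : SimpleGraph W) (π : W → W → ℤ)
    (hsymm : ∀ u v, π u v = π v u) (hpm : ∀ u v, B.Adj u v → π u v = 1 ∨ π u v = -1)
    (g : ℕ) (hg : 0 < g) (hwide : gWide B π g)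
    (hSP : SPComplete B π) :
    SPComplete (EDCsg B π hsymm) edcSign :=
  EDC_SPComplete_general B π hsymm hpm hwide hSP

end SignedPaper
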